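/- For positive integers i, k, n it holds that W_{i,k} = F_n/2 if and only if there exists a positive integer ℓ such that (i, k, n) = ((F_{3ℓ−2}+1)/2, 1, 3ℓ). -/

import Mathlib

open Real

noncomputable def phi : ℝ := (1 + Real.sqrt 5) / 2

noncomputable def W (i : ℕ) : ℕ → ℤ
  | 0 => ⌊phi ^ 2 * (⌊phi * i⌋ : ℝ)⌋ - ⌊phi * (⌊phi * i⌋ : ℝ)⌋
  | 1 => ⌊phi * (⌊phi * i⌋ : ℝ)⌋
  | 2 => ⌊phi ^ 2 * (⌊phi * i⌋ : ℝ)⌋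
  | (k + 3) => W i (k + 2) + W i (k + 1)

noncomputable def wplus (i : ℕ) : ℝ := phi⁻¹ ^ 2 * (W i 1 : ℝ) + phi⁻¹ * (W i 2 : ℝ)

noncomputable def wminus (i : ℕ) : ℝ := phi ^ 2 * (W i 1 : ℝ) - phi * (W i 2 : ℝ)

noncomputable def eta (i : ℕ) : ℝ := -(wplus i * wminus i)

/-! Write `φ`, `ψ` for the golden ratio and its conjugate, so `F_{n+1} - φ F_n = ψ ^ n`. Row `i` of
the Wythoff array, extended to the left by `W_{i,0} = ⌊φ i⌋`, satisfies
`W_{i,k+1} - φ W_{i,k} = -c ψ ^ k` with `c = 1 + ψ {φ i} ∈ (0, 1)`. Hence if `2 W_{i,k} = F_n`, then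
the integer `2 W_{i,k+1} - F_{n+1}` equals `-(2 c ψ ^ k + ψ ^ n)`. As `F_n` is even,
`3 ∣ n` and this integer is odd. For `k ≥ 2` its absolute value would be less than
`2 ψ ^ 2 + |ψ| ^ 3 = 1`, which is impossible. For `k = 1` it lies strictly between `-1` and `2`, so
it is `1`, and this determines `i` from `n`. -/

open scoped goldenRatio

theorem sub_goldenRatio_mul_eq_goldenConj_pow_mul {u : ℕ → ℝ}
    (hu : ∀ n, u (n + 2) = u (n + 1) + u n) (n : ℕ) :
    u (n + 1) - φ * u n = ψ ^ n * (u 1 - φ * u 0) := by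
  induction n with
  | zero => simp
  | succ n ih =>
    rw [pow_succ', mul_assoc, ← ih, hu, ← one_sub_goldenConj]
    linear_combination -u n * goldenRatio_sq

theorem abs_goldenConj : |ψ| = φ - 1 := by
  rw [abs_of_neg goldenConj_neg, ← one_sub_goldenConj, neg_sub]

theorem abs_goldenConj_sq : |ψ| ^ 2 = 1 - |ψ| := by
  rw [abs_goldenConj]
  linear_combination goldenRatio_sq

theorem abs_goldenConj_cube : |ψ| ^ 3 = 2 * |ψ| - 1 := by
  linear_combination (|ψ| - 1) * abs_goldenConj_sq

theorem abs_goldenConj_pos : 0 < |ψ| :=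
  abs_pos.2 goldenConj_ne_zero

theorem abs_goldenConj_lt_three_fourths : |ψ| < 3 / 4 := by
  nlinarith [abs_goldenConj_sq, abs_goldenConj_pos]

theorem abs_goldenConj_pow_le_pow {m n : ℕ} (h : m ≤ n) : |ψ ^ n| ≤ |ψ| ^ m := by
  rw [abs_pow]
  exact pow_le_pow_of_le_one (abs_nonneg ψ) (by linarith [abs_goldenConj_lt_three_fourths]) h

theorem two_dvd_fib_iff {n : ℕ} : 2 ∣ Nat.fib n ↔ 3 ∣ n := by
  refine ⟨fun h => ?_, Nat.fib_dvd 3 n⟩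
  have hgcd : Nat.fib (Nat.gcd n 3) = 2 := (Nat.fib_gcd n 3).trans (Nat.gcd_eq_right h)
  obtain h1 | h3 := (Nat.dvd_prime Nat.prime_three).1 (Nat.gcd_dvd_right n 3)
  · simp [h1] at hgcd
  · exact Nat.gcd_eq_right_iff_dvd.1 h3

theorem fract_goldenRatio_mul_pos {i : ℤ} (hi : i ≠ 0) : 0 < Int.fract (φ * i) :=
  Int.fract_pos.2 ((goldenRatio_irrational.mul_intCast hi).ne_int _)

theorem goldenRatio_mul_floor_goldenRatio_mul (i : ℤ) :
    φ * ⌊φ * i⌋ = ⌊φ * i⌋ + i + ψ * Int.fract (φ * i) := by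
  rw [Int.fract, ← one_sub_goldenConj]
  linear_combination (i : ℝ) * goldenRatio_sq

theorem one_add_goldenConj_mul_fract_pos (x : ℝ) : 0 < 1 + ψ * Int.fract x := by
  nlinarith [neg_one_lt_goldenConj, goldenConj_neg, Int.fract_nonneg x, Int.fract_lt_one x]

theorem one_add_goldenConj_mul_fract_lt_one {i : ℤ} (hi : i ≠ 0) :
    1 + ψ * Int.fract (φ * i) < 1 := by
  linarith [mul_neg_of_neg_of_pos goldenConj_neg (fract_goldenRatio_mul_pos hi)]

theorem floor_goldenRatio_mul_floor_goldenRatio_mul {i : ℤ} (hi : i ≠ 0) :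
    ⌊φ * ⌊φ * i⌋⌋ = ⌊φ * i⌋ + i - 1 := by
  rw [goldenRatio_mul_floor_goldenRatio_mul, Int.floor_eq_iff]
  push_cast
  constructor
  · linarith [one_add_goldenConj_mul_fract_pos (φ * i)]
  · linarith [one_add_goldenConj_mul_fract_lt_one hi]

theorem floor_goldenRatio_mul_of_two_mul_eq_fib_add_one {i j : ℤ} {n : ℕ}
    (hi : 2 * i = Nat.fib (n + 1) + 1) (hj : 2 * j = Nat.fib (n + 2) + 1) : ⌊φ * i⌋ = j := by
  have hiR : 2 * (i : ℝ) = Nat.fib (n + 1) + 1 := mod_cast hi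
  have hjR : 2 * (j : ℝ) = Nat.fib (n + 2) + 1 := mod_cast hj
  have hdist : 2 * (φ * i - j) = |ψ| - ψ ^ (n + 1) := by
    rw [abs_goldenConj]
    linear_combination φ * hiR - hjR - fib_succ_sub_goldenRatio_mul_fib (n + 1)
  have hpow : |ψ ^ (n + 1)| ≤ |ψ| := by
    simpa using abs_goldenConj_pow_le_pow (Nat.le_add_left 1 n)
  rw [abs_le] at hpow
  rw [Int.floor_eq_iff]
  constructor <;> linarith [abs_goldenConj_lt_three_fourths]

theorem phi_eq_goldenRatio : phi = φ := rfl

theorem W_add_two (i k : ℕ) : W i (k + 2) = W i (k + 1) + W i k := by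
  cases k with
  | zero => simp [W]
  | succ k => rfl

theorem W_zero (i : ℕ) : W i 0 = ⌊φ * i⌋ := by
  rw [W, phi_eq_goldenRatio, goldenRatio_sq, add_one_mul, Int.floor_add_intCast,
    add_sub_cancel_left]

theorem W_one {i : ℕ} (hi : 0 < i) : W i 1 = ⌊φ * i⌋ + i - 1 := by
  rw [W, phi_eq_goldenRatio]
  exact floor_goldenRatio_mul_floor_goldenRatio_mul (Int.natCast_ne_zero.2 hi.ne')

theorem W_two {i : ℕ} (hi : 0 < i) : W i 2 = 2 * ⌊φ * i⌋ + i - 1 := by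
  rw [W_add_two, W_one hi, W_zero]
  ring

theorem W_succ_sub_goldenRatio_mul_W {i : ℕ} (hi : 0 < i) (k : ℕ) :
    (W i (k + 1) : ℝ) - φ * W i k = -(ψ ^ k * (1 + ψ * Int.fract (φ * i))) := by
  have hinit : (W i 1 : ℝ) - φ * W i 0 = -(1 + ψ * Int.fract (φ * i)) := by
    have hfloor := goldenRatio_mul_floor_goldenRatio_mul i
    simp only [Int.cast_natCast] at hfloor
    rw [W_one hi, W_zero, hfloor]
    push_cast
    ring
  rw [sub_goldenRatio_mul_eq_goldenConj_pow_mul (u := fun k => (W i k : ℝ))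
    (fun k => mod_cast W_add_two i k), hinit, mul_neg]

section EvenFib

variable {i k n : ℕ}

theorem two_mul_W_succ_sub_fib_succ (hi : 0 < i) (h : 2 * W i k = (Nat.fib n : ℤ)) :
    ((2 * W i (k + 1) - Nat.fib (n + 1) : ℤ) : ℝ) =
      -(2 * ψ ^ k * (1 + ψ * Int.fract (φ * i)) + ψ ^ n) := by
  have hR : 2 * (W i k : ℝ) = Nat.fib n := mod_cast h
  push_cast
  linear_combination 2 * W_succ_sub_goldenRatio_mul_W hi k -
    fib_succ_sub_goldenRatio_mul_fib n + φ * hR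

theorem three_dvd_of_two_mul_eq_fib {a : ℤ} (h : 2 * a = Nat.fib n) : 3 ∣ n :=
  two_dvd_fib_iff.1 (by omega)

theorem odd_two_mul_sub_fib_succ {a : ℤ} (h : 2 * a = Nat.fib n) (b : ℤ) :
    Odd (2 * b - Nat.fib (n + 1)) := by
  have hodd : ¬ 2 ∣ Nat.fib (n + 1) := by
    have := three_dvd_of_two_mul_eq_fib h
    rw [two_dvd_fib_iff]
    omega
  rw [Int.odd_iff]
  omega

theorem column_eq_one_of_two_mul_W_eq_fib (hi : 0 < i) (hk : 0 < k) (hn : 0 < n)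
    (h : 2 * W i k = (Nat.fib n : ℤ)) : k = 1 := by
  by_contra hk1
  have hc_pos := one_add_goldenConj_mul_fract_pos (φ * i)
  have hc_lt : 1 + ψ * Int.fract (φ * i) < 1 :=
    one_add_goldenConj_mul_fract_lt_one (Int.natCast_ne_zero.2 hi.ne')
  have herr := two_mul_W_succ_sub_fib_succ hi h
  have hodd := odd_two_mul_sub_fib_succ h (W i (k + 1))
  set D := 2 * W i (k + 1) - (Nat.fib (n + 1) : ℤ)
  set c := 1 + ψ * Int.fract (φ * i)
  have hD : |(D : ℝ)| < 1 := calc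
    |(D : ℝ)| ≤ 2 * |ψ ^ k| * c + |ψ ^ n| := by
      rw [herr, abs_neg]
      refine (abs_add_le _ _).trans_eq ?_
      rw [abs_mul, abs_mul, abs_two, abs_of_pos hc_pos]
    _ ≤ 2 * |ψ| ^ 2 * c + |ψ| ^ 3 := by
      gcongr
      · exact abs_goldenConj_pow_le_pow (by omega)
      · exact abs_goldenConj_pow_le_pow (Nat.le_of_dvd hn (three_dvd_of_two_mul_eq_fib h))
    _ < 2 * |ψ| ^ 2 * 1 + |ψ| ^ 3 := by
      have := abs_goldenConj_pos
      gcongr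
    _ = 1 := by rw [abs_goldenConj_cube, abs_goldenConj_sq]; ring
  have hD0 : D = 0 := Int.abs_lt_one_iff.1 (mod_cast hD)
  simp [hD0] at hodd

theorem two_mul_W_two_eq_fib_succ_add_one (hi : 0 < i) (hn : 0 < n)
    (h : 2 * W i 1 = (Nat.fib n : ℤ)) : 2 * W i 2 = Nat.fib (n + 1) + 1 := by
  have hc_pos := one_add_goldenConj_mul_fract_pos (φ * i)
  have hc_lt : 1 + ψ * Int.fract (φ * i) < 1 :=
    one_add_goldenConj_mul_fract_lt_one (Int.natCast_ne_zero.2 hi.ne')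
  have herr := two_mul_W_succ_sub_fib_succ hi h
  obtain ⟨d, hd⟩ := odd_two_mul_sub_fib_succ h (W i 2)
  have hpow := abs_le.1
    (abs_goldenConj_pow_le_pow (Nat.le_of_dvd hn (three_dvd_of_two_mul_eq_fib h)))
  rw [abs_goldenConj_cube] at hpow
  have hψ : ψ = -|ψ| := by rw [abs_of_neg goldenConj_neg, neg_neg]
  set D := 2 * W i 2 - (Nat.fib (n + 1) : ℤ)
  set c := 1 + ψ * Int.fract (φ * i)
  replace herr : (D : ℝ) = 2 * (|ψ| * c) - ψ ^ n := by
    rw [herr]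
    linear_combination -2 * c * hψ
  have hmul_pos : 0 < |ψ| * c := mul_pos abs_goldenConj_pos hc_pos
  have hmul_lt : |ψ| * c < |ψ| := mul_lt_of_lt_one_right abs_goldenConj_pos hc_lt
  have hψ_lt := abs_goldenConj_lt_three_fourths
  have hD_gt : -1 < D := by
    rify
    linarith
  have hD_lt : D < 2 := by
    rify
    linarith
  omega

theorem two_mul_eq_fib_add_one_of_two_mul_W_one_eq_fib (hi : 0 < i)
    (h : 2 * W i 1 = (Nat.fib (n + 2) : ℤ)) : 2 * i = Nat.fib n + 1 := by
  have hW_two := two_mul_W_two_eq_fib_succ_add_one hi (by omega) h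
  have hfib : Nat.fib (n + 2) = Nat.fib n + Nat.fib (n + 1) := Nat.fib_add_two
  have hfib_succ : Nat.fib (n + 2 + 1) = Nat.fib (n + 1) + Nat.fib (n + 2) := Nat.fib_add_two
  rw [W_two hi] at hW_two
  rw [W_one hi] at h
  omega

theorem two_mul_W_one_eq_fib (hi : 2 * i = Nat.fib (n + 1) + 1) (hodd : ¬ 2 ∣ Nat.fib (n + 2)) :
    2 * W i 1 = Nat.fib (n + 3) := by
  obtain ⟨j, hj⟩ : ∃ j : ℤ, 2 * j = Nat.fib (n + 2) + 1 :=
    ⟨(Nat.fib (n + 2) + 1) / 2, by omega⟩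
  have hfloor : ⌊φ * i⌋ = j :=
    floor_goldenRatio_mul_of_two_mul_eq_fib_add_one (i := i) (mod_cast hi) hj
  have hfib : Nat.fib (n + 3) = Nat.fib (n + 1) + Nat.fib (n + 2) := Nat.fib_add_two
  rw [W_one (by omega), hfloor]
  omega

end EvenFib

/-- `W_{i,k} = F_n/2` iff `(i,k,n) = ((F_{3ℓ−2}+1)/2, 1, 3ℓ)` for some `ℓ ≥ 1`. -/
theorem wythoff_eq_half_fib_iff (i k n : ℕ) (hi : 0 < i) (hk : 0 < k) (hn : 0 < n) :
    2 * W i k = (Nat.fib n : ℤ) ↔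
      ∃ ℓ : ℕ, 0 < ℓ ∧ 2 * i = Nat.fib (3 * ℓ - 2) + 1 ∧ k = 1 ∧ n = 3 * ℓ := by
  constructor
  · intro h
    obtain rfl := column_eq_one_of_two_mul_W_eq_fib hi hk hn h
    obtain ⟨ℓ, rfl⟩ := three_dvd_of_two_mul_eq_fib h
    have h_index : 3 * ℓ = 3 * ℓ - 2 + 2 := by omega
    rw [h_index] at h
    exact ⟨ℓ, by omega, two_mul_eq_fib_add_one_of_two_mul_W_one_eq_fib hi h, rfl, rfl⟩
  · rintro ⟨ℓ, hℓ, h_row, rfl, rfl⟩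
    obtain ⟨m, rfl⟩ := Nat.exists_eq_succ_of_ne_zero hℓ.ne'
    exact two_mul_W_one_eq_fib (n := 3 * m) h_row (by rw [two_dvd_fib_iff]; omega)
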